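/- Every signed eulerian graph that admits a nowhere-zero integer flow admits a nowhere-zero 4-flow. -/

import Mathlib

open Finset

/-- A signed multigraph on vertex type `V` with edge type `E`: each edge `e`
consists of two half-edges indexed by `Bool`; `ends e i` is the end-vertex at
which the half-edge `(e, i)` is attached (loops and multiple edges are
allowed), and `sign e ∈ {1, -1}` is the sign of the edge `e`. -/
structure SignedGraph (V E : Type) where
  ends : E → Bool → V
  sign : E → ℤˣ

namespace SignedGraph

variable {V E : Type} [Fintype V] [Fintype E] [DecidableEq V] [DecidableEq E]

/-- The valency of `v` in the subgraph spanned by the edge set `S`: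
the number of half-edges of edges of `S` attached at `v` (a loop at `v`
contributes `2`). -/
def valencyOn (G : SignedGraph V E) (S : Finset E) (v : V) : ℕ :=
  (univ.filter fun p : E × Bool => p.1 ∈ S ∧ G.ends p.1 p.2 = v).card

/-- The valency of a vertex in `G`. -/
def valency (G : SignedGraph V E) (v : V) : ℕ :=
  G.valencyOn univ v

/-- The set of vertices incident with some edge of `S`. -/
def suppV (G : SignedGraph V E) (S : Finset E) : Finset V :=
  univ.filter fun v => ∃ e ∈ S, ∃ i : Bool, G.ends e i = v

/-- `u` and `v` are joined by an edge of `S`. -/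
def AdjOn (G : SignedGraph V E) (S : Finset E) (u v : V) : Prop :=
  ∃ e ∈ S, ∃ i : Bool, G.ends e i = u ∧ G.ends e (!i) = v

/-- The subgraph spanned by the edge set `S` is connected: any two vertices
incident with edges of `S` are joined by a walk using edges of `S`. -/
def ConnOn (G : SignedGraph V E) (S : Finset E) : Prop :=
  ∀ u ∈ G.suppV S, ∀ v ∈ G.suppV S, Relation.ReflTransGen (G.AdjOn S) u v

/-- `G` is connected (as a graph on the whole vertex set `V`). -/
def Connected (G : SignedGraph V E) : Prop :=
  Nonempty V ∧ ∀ u v : V, Relation.ReflTransGen (G.AdjOn univ) u v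

/-- The edge set `S` spans a circuit: a nonempty connected `2`-regular
subgraph. -/
def IsCircuit (G : SignedGraph V E) (S : Finset E) : Prop :=
  S.Nonempty ∧ G.ConnOn S ∧ ∀ v ∈ G.suppV S, G.valencyOn S v = 2

/-- The sign of a set of edges: the product of the signs of its edges. -/
def signOf (G : SignedGraph V E) (S : Finset E) : ℤˣ :=
  ∏ e ∈ S, G.sign e

/-- The negative edges among `S`. -/
def negEdges (G : SignedGraph V E) (S : Finset E) : Finset E :=
  S.filter fun e => G.sign e = -1

/-- A balanced circuit: a circuit of sign `+1`. -/
def IsBalancedCircuit (G : SignedGraph V E) (S : Finset E) : Prop :=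
  G.IsCircuit S ∧ G.signOf S = 1

/-- An unbalanced circuit: a circuit of sign `-1`. -/
def IsUnbalancedCircuit (G : SignedGraph V E) (S : Finset E) : Prop :=
  G.IsCircuit S ∧ G.signOf S = -1

/-- `G` is balanced: it contains no unbalanced circuit. -/
def Balanced (G : SignedGraph V E) : Prop :=
  ∀ S : Finset E, G.IsCircuit S → G.signOf S = 1

/-- `G` is tightly unbalanced: it is unbalanced, but for some edge `f` the
graph `G - f` is balanced. -/
def TightlyUnbalanced (G : SignedGraph V E) : Prop :=
  ¬ G.Balanced ∧ ∃ f : E, ∀ S : Finset E, G.IsCircuit S → f ∉ S → G.signOf S = 1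

/-- `G` is eulerian: connected with all valencies even. -/
def Eulerian (G : SignedGraph V E) : Prop :=
  G.Connected ∧ ∀ v : V, Even (G.valency v)

/-- The edge set `S` spans an eulerian subgraph of `G`. -/
def EulerianOn (G : SignedGraph V E) (S : Finset E) : Prop :=
  S.Nonempty ∧ G.ConnOn S ∧ ∀ v : V, Even (G.valencyOn S v)

/-- An orientation (bidirection) of `G`: `dir e i = true` means that the
half-edge `(e, i)` is directed towards its end-vertex, `dir e i = false` that
it is directed away from it.  Compatibility: a positive edge becomes an
ordinary directed edge (one half-edge in, one out) and a negative edge becomes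
a broken (extroverted or introverted) edge. -/
structure Orientation (G : SignedGraph V E) where
  dir : E → Bool → Bool
  compat : ∀ e : E, G.sign e = 1 ↔ dir e false ≠ dir e true

/-- `φ` is a flow on `G` with respect to the orientation `O`: at every vertex
`v`, the sum of values on half-edges directed into `v` equals the sum of
values on half-edges directed out of `v` (Kirchhoff's law). -/
def IsFlow {A : Type} [AddCommGroup A] (G : SignedGraph V E)
    (O : G.Orientation) (φ : E → A) : Prop :=
  ∀ v : V,
    ∑ p ∈ univ.filter (fun p : E × Bool => G.ends p.1 p.2 = v),
      (if O.dir p.1 p.2 then φ p.1 else -φ p.1) = 0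

/-- `G` admits a nowhere-zero `A`-flow. -/
def HasNZFlow (G : SignedGraph V E) (A : Type) [AddCommGroup A] : Prop :=
  ∃ (O : G.Orientation) (φ : E → A), G.IsFlow O φ ∧ ∀ e : E, φ e ≠ 0

/-- `G` is flow-admissible: it admits a nowhere-zero integer flow. -/
def FlowAdmissible (G : SignedGraph V E) : Prop :=
  ∃ (O : G.Orientation) (φ : E → ℤ), G.IsFlow O φ ∧ ∀ e : E, φ e ≠ 0

/-- `G` admits a nowhere-zero `k`-flow: an integer flow with all values in
`{±1, …, ±(k-1)}`. -/
def HasNZkFlow (G : SignedGraph V E) (k : ℕ) : Prop :=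
  ∃ (O : G.Orientation) (φ : E → ℤ), G.IsFlow O φ ∧
    ∀ e : E, φ e ≠ 0 ∧ |φ e| < (k : ℤ)

/-- `G` is triply odd: it can be decomposed into three edge-disjoint eulerian
subgraphs, each with an odd number of negative edges, sharing a common
vertex. -/
def TriplyOdd (G : SignedGraph V E) : Prop :=
  ∃ S₁ S₂ S₃ : Finset E,
    Disjoint S₁ S₂ ∧ Disjoint S₁ S₃ ∧ Disjoint S₂ S₃ ∧
    S₁ ∪ S₂ ∪ S₃ = univ ∧
    G.EulerianOn S₁ ∧ G.EulerianOn S₂ ∧ G.EulerianOn S₃ ∧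
    Odd (G.negEdges S₁).card ∧ Odd (G.negEdges S₂).card ∧
    Odd (G.negEdges S₃).card ∧
    ∃ v : V, v ∈ G.suppV S₁ ∧ v ∈ G.suppV S₂ ∧ v ∈ G.suppV S₃

/-- The edge set `P` spans a (nontrivial) path from `u` to `v`: a connected
subgraph in which `u` and `v` have valency `1` and all other vertices have
valency `2`. -/
def IsPathOn (G : SignedGraph V E) (P : Finset E) (u v : V) : Prop :=
  u ≠ v ∧ G.ConnOn P ∧ u ∈ G.suppV P ∧ v ∈ G.suppV P ∧
  G.valencyOn P u = 1 ∧ G.valencyOn P v = 1 ∧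
  ∀ w ∈ G.suppV P, w ≠ u → w ≠ v → G.valencyOn P w = 2

/-- `T` spans a signed circuit of type (2): the union of two unbalanced
circuits meeting at a single vertex. -/
def IsType2 (G : SignedGraph V E) (T : Finset E) : Prop :=
  ∃ (S₁ S₂ : Finset E) (v : V),
    G.IsUnbalancedCircuit S₁ ∧ G.IsUnbalancedCircuit S₂ ∧ Disjoint S₁ S₂ ∧
    G.suppV S₁ ∩ G.suppV S₂ = {v} ∧ S₁ ∪ S₂ = T

/-- `T` spans a signed circuit of type (3): the union of two vertex-disjoint
unbalanced circuits together with a path meeting the circuits only at its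
ends. -/
def IsType3 (G : SignedGraph V E) (T : Finset E) : Prop :=
  ∃ (S₁ S₂ P : Finset E) (u v : V),
    G.IsUnbalancedCircuit S₁ ∧ G.IsUnbalancedCircuit S₂ ∧
    Disjoint (G.suppV S₁) (G.suppV S₂) ∧
    G.IsPathOn P u v ∧ u ∈ G.suppV S₁ ∧ v ∈ G.suppV S₂ ∧
    G.suppV P ∩ G.suppV S₁ = {u} ∧ G.suppV P ∩ G.suppV S₂ = {v} ∧
    Disjoint P (S₁ ∪ S₂) ∧ S₁ ∪ S₂ ∪ P = T

/-- `T` spans a signed circuit: a balanced circuit, or a signed circuit of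
type (2) or (3). -/
def IsSignedCircuit (G : SignedGraph V E) (T : Finset E) : Prop :=
  G.IsBalancedCircuit T ∨ G.IsType2 T ∨ G.IsType3 T

/-- `T` spans a weak unbalanced bicircuit: two edge-disjoint unbalanced
circuits (not necessarily vertex-disjoint) joined by a possibly trivial path
having no edge in the two circuits. -/
def IsWeakBicircuit (G : SignedGraph V E) (T : Finset E) : Prop :=
  ∃ C₁ C₂ : Finset E,
    G.IsUnbalancedCircuit C₁ ∧ G.IsUnbalancedCircuit C₂ ∧ Disjoint C₁ C₂ ∧
    (((∃ v : V, v ∈ G.suppV C₁ ∧ v ∈ G.suppV C₂) ∧ T = C₁ ∪ C₂) ∨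
      ∃ (P : Finset E) (u v : V),
        G.IsPathOn P u v ∧ u ∈ G.suppV C₁ ∧ v ∈ G.suppV C₂ ∧
        Disjoint P (C₁ ∪ C₂) ∧ T = C₁ ∪ C₂ ∪ P)

/-- Every connected component of `G - f` contains an unbalanced circuit,
i.e. `G - f` has no balanced component. -/
def NoBalancedComponentAvoiding (G : SignedGraph V E) (f : E) : Prop :=
  ∀ u : V, ∃ S : Finset E,
    G.IsCircuit S ∧ G.signOf S = -1 ∧ f ∉ S ∧
    ∀ w ∈ G.suppV S, Relation.ReflTransGen (G.AdjOn (univ.erase f)) w u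

/-- `G` is 2-edge-connected: connected, and still connected after removing
any single edge. -/
def TwoEdgeConnected (G : SignedGraph V E) : Prop :=
  G.Connected ∧ ∀ f : E, ∀ u v : V,
    Relation.ReflTransGen (G.AdjOn (univ.erase f)) u v

/-- `G` is antibalanced: replacing its signature `σ` by `-σ` makes it
balanced. -/
def Antibalanced (G : SignedGraph V E) : Prop :=
  ∀ S : Finset E, G.IsCircuit S → (∏ e ∈ S, (-G.sign e)) = 1

end SignedGraph

/-!
An eulerian graph is a closed trail. A closed trail of sign `1` carries a flow with values `±1`, and
if two edge sets carrying flows `α` and `β` with values `±1` cover `G`, then `α + 2β` is a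
nowhere-zero `4`-flow. So let `G` have sign `-1`.

If some switching of `G` had a single negative edge, then every flow would vanish on it. Hence `G`
is not tight in this sense, and it follows that `G` contains two disjoint even edge sets of
sign `-1`: split off pairs of adjacent edges as long as the result is not tight. When splitting off
`e₁` and `e₂` gives a tight graph, both are negative in a switching of `G` with exactly three
negative edges, which is the minimum; now Menger's theorem, applied after detaching `e₁` and `e₂`
from their common vertex and deleting the third negative edge, yields two disjoint closed trails
with one negative edge each. When no two edges are adjacent, all of them are loops.

Take a closed trail `X` of sign `-1` in the first of these sets. If `G - X` has a component `K` of
sign `-1`, then `X ∪ K` and `G - K` are positive closed trails covering `G`. Otherwise `G - X` is a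
union of positive closed trails, and a component `K` of `G - X` containing a negative closed trail
has one, `Z`, that meets `X`; so `G - X` and `X ∪ Z` are the two sets.
-/

namespace SignedGraph

variable {V E : Type} {G : SignedGraph V E}

/-- The coboundary of a `±1`-valued function `s` on the vertices. The edges on which it is `-1` form
the edge cut between `s = 1` and `s = -1`, and switching at `s` multiplies the signature by it. -/
def coboundary (G : SignedGraph V E) (s : V → ℤˣ) (e : E) : ℤˣ :=
  s (G.ends e false) * s (G.ends e true)

/-- `S` is an element of the cycle space over `ℤ/2`, i.e. all its valencies are even, encoded
multiplicatively as orthogonality to all edge cuts. -/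
def IsEven (G : SignedGraph V E) (S : Finset E) : Prop :=
  ∀ s : V → ℤˣ, ∏ e ∈ S, G.coboundary s e = 1

theorem coboundary_mul (s t : V → ℤˣ) (e : E) :
    G.coboundary (s * t) e = G.coboundary s e * G.coboundary t e :=
  mul_mul_mul_comm ..

theorem coboundary_eq_mul_not (s : V → ℤˣ) (e : E) (i : Bool) :
    G.coboundary s e = s (G.ends e i) * s (G.ends e !i) := by
  cases i
  · rfl
  · exact mul_comm ..

theorem IsEven.sdiff [DecidableEq E] {A B : Finset E} (hA : G.IsEven A) (hB : G.IsEven B)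
    (hBA : B ⊆ A) : G.IsEven (A \ B) := fun s ↦ by
  simpa only [hA s, hB s, mul_one] using Finset.prod_sdiff (f := G.coboundary s) hBA

section Trail

variable [DecidableEq E]

/-- `G.IsTrail S u v`: the edges of `S` can be arranged into a trail (a walk without repeated
edges) from `u` to `v`. -/
inductive IsTrail (G : SignedGraph V E) : Finset E → V → V → Prop
  | nil (u : V) : IsTrail G ∅ u u
  | cons {S : Finset E} {e : E} {i : Bool} {v : V} :
      e ∉ S → IsTrail G S (G.ends e !i) v → IsTrail G (insert e S) (G.ends e i) v

/-- `S` is the edge set of a closed trail; the empty set counts as a trivial closed trail. -/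
def IsClosedTrail (G : SignedGraph V E) (S : Finset E) : Prop :=
  ∃ z, G.IsTrail S z z

variable {S T : Finset E} {u v w : V} {e : E} {i : Bool}

theorem IsTrail.append (hS : G.IsTrail S u w) (hT : G.IsTrail T w v) (hd : Disjoint S T) :
    G.IsTrail (S ∪ T) u v := by
  induction hS with
  | nil u => rwa [empty_union]
  | cons he _ ih =>
    rw [disjoint_insert_left] at hd
    rw [insert_union]
    exact .cons (by simp [he, hd.1]) (ih hT hd.2)

theorem isTrail_singleton (e : E) (i : Bool) : G.IsTrail {e} (G.ends e i) (G.ends e !i) := by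
  simpa using IsTrail.cons (notMem_empty e) (IsTrail.nil (G.ends e !i))

theorem IsTrail.snoc (h : G.IsTrail S u (G.ends e i)) (he : e ∉ S) :
    G.IsTrail (insert e S) u (G.ends e !i) := by
  rw [insert_eq, union_comm]
  exact h.append (isTrail_singleton e i) (disjoint_singleton_right.2 he)

theorem IsTrail.symm (h : G.IsTrail S u v) : G.IsTrail S v u := by
  induction h with
  | nil u => exact .nil u
  | cons he _ ih => simpa using ih.snoc he

theorem IsTrail.prod_coboundary (h : G.IsTrail S u v) (s : V → ℤˣ) :
    ∏ e ∈ S, G.coboundary s e = s u * s v := by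
  induction h with
  | nil u => simp [Int.units_mul_self]
  | @cons S e i v he _ ih =>
    rw [prod_insert he, ih, coboundary_eq_mul_not s e i, mul_assoc, ← mul_assoc (s _) (s _) (s v),
      Int.units_mul_self, one_mul]

theorem IsTrail.isEven (h : G.IsTrail S u u) : G.IsEven S := fun s ↦ by
  rw [h.prod_coboundary, Int.units_mul_self]

theorem IsClosedTrail.isEven (h : G.IsClosedTrail S) : G.IsEven S :=
  h.elim fun _ ↦ IsTrail.isEven

theorem IsTrail.exists_split (h : G.IsTrail S u v) (he : e ∈ S) (i : Bool) :
    ∃ S₁ S₂, Disjoint S₁ S₂ ∧ S₁ ∪ S₂ = S ∧ G.IsTrail S₁ u (G.ends e i) ∧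
      G.IsTrail S₂ (G.ends e i) v := by
  induction h with
  | nil u => exact absurd he (notMem_empty e)
  | @cons S f j v hf h ih =>
    obtain rfl | heS := mem_insert.1 he
    · obtain rfl | rfl : i = j ∨ i = !j := by cases i <;> cases j <;> simp
      · exact ⟨∅, insert e S, disjoint_empty_left _, empty_union _, .nil _, .cons hf h⟩
      · exact ⟨{e}, S, disjoint_singleton_left.2 hf, rfl, isTrail_singleton e j, h⟩
    · obtain ⟨S₁, S₂, hd, rfl, h₁, h₂⟩ := ih heS
      rw [mem_union, not_or] at hf
      exact ⟨insert f S₁, S₂, disjoint_insert_left.2 ⟨hf.2, hd⟩, insert_union .., .cons hf.1 h₁, h₂⟩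

theorem IsTrail.exists_exit {P : V → Prop} (h : G.IsTrail S u v) (hu : P u) (hv : ¬ P v) :
    ∃ e ∈ S, ∃ (i : Bool) (T : Finset E), T ⊆ S.erase e ∧ P (G.ends e i) ∧ ¬ P (G.ends e !i) ∧
      G.IsTrail T (G.ends e !i) v := by
  induction h with
  | nil u => exact absurd hu hv
  | @cons S e i v he h ih =>
    by_cases hP : P (G.ends e !i)
    · obtain ⟨f, hf, j, T, hT, hrest⟩ := ih hP hv
      exact ⟨f, mem_insert_of_mem hf, j, T, hT.trans (erase_subset_erase f (subset_insert e S)),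
        hrest⟩
    · exact ⟨e, mem_insert_self e S, i, S, by rw [erase_insert he], hu, hP, h⟩

theorem IsEven.exists_mem_sdiff_of_isTrail (hT : G.IsEven T) (hST : S ⊆ T) (h : G.IsTrail S u v)
    (huv : u ≠ v) : ∃ e ∈ T \ S, ∃ i, G.ends e i = v := by
  classical
  by_contra! hc
  let s : V → ℤˣ := fun x ↦ if x = v then -1 else 1
  have hsdiff : ∏ e ∈ T \ S, G.coboundary s e = 1 :=
    prod_eq_one fun e he ↦ by simp [coboundary, s, hc e he]
  have hprod := prod_sdiff (f := G.coboundary s) hST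
  rw [hT s, h.prod_coboundary, hsdiff] at hprod
  simp [s, huv] at hprod

end Trail

section Support

variable [Fintype V] [DecidableEq V]
variable {S T K L W U : Finset E} {u v z : V} {e : E}

theorem mem_suppV : z ∈ G.suppV S ↔ ∃ e ∈ S, ∃ i, G.ends e i = z := by
  simp [suppV]

theorem ends_mem_suppV (he : e ∈ S) (i : Bool) : G.ends e i ∈ G.suppV S :=
  mem_suppV.2 ⟨e, he, i, rfl⟩

theorem suppV_mono (h : S ⊆ T) : G.suppV S ⊆ G.suppV T := fun _ hz ↦ by
  obtain ⟨e, he, i, rfl⟩ := mem_suppV.1 hz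
  exact ends_mem_suppV (h he) i

theorem suppV_nonempty (h : S.Nonempty) : (G.suppV S).Nonempty :=
  h.elim fun _ he ↦ ⟨_, ends_mem_suppV he false⟩

theorem nonempty_of_mem_suppV (h : z ∈ G.suppV S) : S.Nonempty :=
  (mem_suppV.1 h).elim fun e he ↦ ⟨e, he.1⟩

variable [DecidableEq E]

theorem suppV_union : G.suppV (S ∪ T) = G.suppV S ∪ G.suppV T := by
  ext z
  simp only [mem_suppV, mem_union, or_and_right, exists_or]

theorem IsClosedTrail.isTrail (h : G.IsClosedTrail S) (hz : z ∈ G.suppV S) : G.IsTrail S z z := by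
  obtain ⟨u, hu⟩ := h
  obtain ⟨e, he, i, rfl⟩ := mem_suppV.1 hz
  obtain ⟨S₁, S₂, hd, rfl, h₁, h₂⟩ := hu.exists_split he i
  rw [union_comm]
  exact h₂.append h₁ hd.symm

theorem IsClosedTrail.union (hS : G.IsClosedTrail S) (hT : G.IsClosedTrail T)
    (hd : Disjoint S T) (hzS : z ∈ G.suppV S) (hzT : z ∈ G.suppV T) : G.IsClosedTrail (S ∪ T) :=
  ⟨z, (hS.isTrail hzS).append (hT.isTrail hzT) hd⟩

theorem IsEven.exists_isClosedTrail (hW : G.IsEven W) (hz : z ∈ G.suppV W) :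
    ∃ K ⊆ W, G.IsClosedTrail K ∧ z ∈ G.suppV K := by
  classical
  obtain ⟨e, he, i, rfl⟩ := mem_suppV.1 hz
  have he_mem : {e} ∈ W.powerset.filter fun S ↦
      e ∈ S ∧ ∃ w, G.IsTrail S (G.ends e i) w := by
    simpa using ⟨he, _, isTrail_singleton e i⟩
  obtain ⟨S, hS, hmax⟩ := exists_max_image _ card ⟨_, he_mem⟩
  simp only [mem_filter, mem_powerset, and_imp, forall_exists_index] at hS hmax
  obtain ⟨hSW, heS, w, hw⟩ := hS
  refine ⟨S, hSW, ?_, ends_mem_suppV heS i⟩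
  by_cases hclosed : G.ends e i = w
  · exact ⟨w, hclosed ▸ hw⟩
  obtain ⟨f, hf, j, rfl⟩ := hW.exists_mem_sdiff_of_isTrail hSW hw hclosed
  rw [mem_sdiff] at hf
  have hcard := hmax _ (insert_subset hf.1 hSW) (mem_insert_of_mem heS) _ (hw.snoc hf.2)
  rw [card_insert_of_notMem hf.2] at hcard
  lia

/-- `K` is a union of connected components of the subgraph spanned by `W`. -/
def IsSeparated (G : SignedGraph V E) (K W : Finset E) : Prop :=
  K ⊆ W ∧ Disjoint (G.suppV K) (G.suppV (W \ K))

theorem IsSeparated.sdiff (h : G.IsSeparated K W) : G.IsSeparated (W \ K) W :=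
  ⟨sdiff_subset, by rw [Finset.sdiff_sdiff_eq_self h.1]; exact h.2.symm⟩

theorem IsSeparated.trans (hL : G.IsSeparated L K) (hK : G.IsSeparated K W) :
    G.IsSeparated L W := by
  refine ⟨hL.1.trans hK.1, ?_⟩
  rw [← sdiff_union_sdiff_cancel hK.1 hL.1, suppV_union, disjoint_union_right]
  exact ⟨hK.2.mono_left (suppV_mono hL.1), hL.2⟩

theorem IsSeparated.subset_of_isTrail (hK : G.IsSeparated K W) (h : G.IsTrail S u v)
    (hS : S ⊆ W) (hu : u ∈ G.suppV K) : S ⊆ K := by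
  induction h with
  | nil u => exact empty_subset K
  | @cons S e i _ _ _ ih =>
    rw [insert_subset_iff] at hS ⊢
    have heK : e ∈ K := by
      by_contra heK
      exact disjoint_left.1 hK.2 hu (ends_mem_suppV (mem_sdiff.2 ⟨hS.1, heK⟩) i)
    exact ⟨heK, ih hS.2 (ends_mem_suppV heK _)⟩

theorem IsSeparated.subset_of_isClosedTrail (hK : G.IsSeparated K W) (hS : G.IsClosedTrail S)
    (hSW : S ⊆ W) (hzS : z ∈ G.suppV S) (hzK : z ∈ G.suppV K) : S ⊆ K :=
  hK.subset_of_isTrail (hS.isTrail hzS) hSW hzK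

theorem IsSeparated.eq_of_isClosedTrail (hK : G.IsSeparated K U) (hU : G.IsClosedTrail U)
    (hne : K.Nonempty) : K = U := by
  obtain ⟨z, hz⟩ := suppV_nonempty (G := G) hne
  exact hK.1.antisymm (hK.subset_of_isClosedTrail hU subset_rfl (suppV_mono hK.1 hz) hz)

theorem IsEven.exists_component (hW : G.IsEven W) (hz : z ∈ G.suppV W) :
    ∃ K, G.IsSeparated K W ∧ G.IsClosedTrail K ∧ z ∈ G.suppV K := by
  classical
  obtain ⟨K₀, hK₀W, hK₀⟩ := hW.exists_isClosedTrail hz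
  obtain ⟨K, hK, hmax⟩ := exists_max_image
    (W.powerset.filter fun K ↦ G.IsClosedTrail K ∧ z ∈ G.suppV K) card ⟨K₀, by simp [hK₀W, hK₀]⟩
  simp only [mem_filter, mem_powerset, and_imp] at hK hmax
  obtain ⟨hKW, hK, hzK⟩ := hK
  refine ⟨K, ⟨hKW, disjoint_left.2 fun y hyK hyW ↦ ?_⟩, hK, hzK⟩
  obtain ⟨L, hLW, hL, hyL⟩ := (hW.sdiff hK.isEven hKW).exists_isClosedTrail hyW
  have hKL : Disjoint K L := disjoint_sdiff.mono_right hLW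
  have hcard := hmax _ (union_subset hKW (hLW.trans sdiff_subset)) (hK.union hL hKL hyK hyL)
    (suppV_mono subset_union_left hzK)
  rw [card_union_of_disjoint hKL] at hcard
  have := (nonempty_of_mem_suppV hyL).card_pos
  lia

@[elab_as_elim]
theorem IsEven.induction_on_components {P : Finset E → Prop} (hW : G.IsEven W) (empty : P ∅)
    (component : ∀ K, G.IsSeparated K W → G.IsClosedTrail K → P K)
    (union : ∀ S T, Disjoint S T → P S → P T → P (S ∪ T)) : P W := by
  induction hn : #W using Nat.strong_induction_on generalizing W with
  | _ n ih =>
  obtain rfl | hne := W.eq_empty_or_nonempty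
  · exact empty
  obtain ⟨z, hz⟩ := suppV_nonempty (G := G) hne
  obtain ⟨K, hKW, hK, hzK⟩ := hW.exists_component hz
  have hlt : #(W \ K) < n :=
    hn ▸ card_lt_card (sdiff_ssubset hKW.1 (nonempty_of_mem_suppV hzK))
  rw [← union_sdiff_of_subset hKW.1]
  exact union _ _ disjoint_sdiff (component K hKW hK)
    (ih _ hlt (hW.sdiff hK.isEven hKW.1) (fun L hL ↦ component L (hL.trans hKW.sdiff)) rfl)

theorem IsClosedTrail.exists_mem_suppV_of_isSeparated_sdiff {X : Finset E}
    (hU : G.IsClosedTrail U) (hXU : X ⊆ U) (hX : X.Nonempty) (hK : G.IsSeparated K (U \ X))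
    (hne : K.Nonempty) : ∃ z, z ∈ G.suppV X ∧ z ∈ G.suppV K := by
  by_contra! hdisj
  have hKU : G.IsSeparated K U := by
    refine ⟨hK.1.trans sdiff_subset, ?_⟩
    rw [← sdiff_union_sdiff_cancel sdiff_subset hK.1, Finset.sdiff_sdiff_eq_self hXU, suppV_union,
      disjoint_union_right]
    exact ⟨disjoint_right.2 hdisj, hK.2⟩
  obtain rfl := hKU.eq_of_isClosedTrail hU hne
  obtain ⟨e, he⟩ := hX
  exact (mem_sdiff.1 (hK.1 (hXU he))).2 he

theorem IsClosedTrail.sdiff_of_isSeparated_sdiff {X : Finset E} (hU : G.IsClosedTrail U)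
    (hX : G.IsClosedTrail X) (hXU : X ⊆ U) (hne : X.Nonempty) (hK : G.IsClosedTrail K)
    (hKX : G.IsSeparated K (U \ X)) : G.IsClosedTrail (U \ K) := by
  have hXK : X ⊆ U \ K := subset_sdiff.2 ⟨hXU, disjoint_sdiff.mono_right hKX.1⟩
  have hKU : K ⊆ U := hKX.1.trans sdiff_subset
  obtain ⟨z, hz⟩ := suppV_nonempty (G := G) hne
  obtain ⟨M, hM, hMt, hzM⟩ := (hU.isEven.sdiff hK.isEven hKU).exists_component (suppV_mono hXK hz)
  have hXM : X ⊆ M := hM.subset_of_isClosedTrail hX hXK hz hzM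
  -- The components of `U \ K` other than `M` touch neither `X` nor `K`, so they are cut off in `U`.
  have hrest : G.IsSeparated ((U \ K) \ M) U := by
    refine ⟨sdiff_subset.trans sdiff_subset, ?_⟩
    rw [← sdiff_union_sdiff_cancel (sdiff_subset (s := U) (t := K)) sdiff_subset,
      Finset.sdiff_sdiff_eq_self hKU, Finset.sdiff_sdiff_eq_self hM.1, suppV_union,
      disjoint_union_right]
    refine ⟨hKX.2.symm.mono_left (suppV_mono fun e he ↦ ?_), hM.2.symm⟩
    simp only [mem_sdiff] at he ⊢
    exact ⟨⟨he.1.1, fun heX ↦ he.2 (hXM heX)⟩, he.1.2⟩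
  have hempty : (U \ K) \ M = ∅ := by
    by_contra hne'
    have heq := hrest.eq_of_isClosedTrail hU (nonempty_iff_ne_empty.2 hne')
    obtain ⟨e, he⟩ := hne
    exact (mem_sdiff.1 (heq ▸ hXU he)).2 (hXM he)
  rwa [(sdiff_eq_empty_iff_subset.1 hempty).antisymm hM.1]

end Support

section Menger

variable [DecidableEq E]
variable {S₁ S₂ Q D : Finset E} {u v w : V} {e f : E} {i j : Bool}

/-- There are two edge-disjoint trails from `v` to `w` inside `D`. -/
def DoublyJoined (G : SignedGraph V E) (D : Finset E) (v w : V) : Prop :=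
  ∃ S₁ ⊆ D, ∃ S₂ ⊆ D, Disjoint S₁ S₂ ∧ G.IsTrail S₁ v w ∧ G.IsTrail S₂ v w

theorem IsTrail.exists_tail_disjoint (h : G.IsTrail Q u w) (K : Finset E) :
    Disjoint Q K ∨ ∃ f ∈ K, ∃ j, ∃ Q' ⊆ Q, Disjoint Q' K ∧ G.IsTrail Q' (G.ends f j) w := by
  induction h with
  | nil u => exact .inl (disjoint_empty_left K)
  | @cons S e i w _ h ih =>
    obtain hSK | ⟨f, hf, j, Q', hQ', hrest⟩ := ih
    · by_cases heK : e ∈ K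
      · exact .inr ⟨e, heK, !i, S, subset_insert e S, hSK, h⟩
      · exact .inl (disjoint_insert_left.2 ⟨heK, hSK⟩)
    · exact .inr ⟨f, hf, j, Q', hQ'.trans (subset_insert e S), hrest⟩

theorem doublyJoined_of_tail (hS₁D : S₁ ⊆ D) (hS₂D : S₂ ⊆ D) (hQD : Q ⊆ D.erase e) (he : e ∈ D)
    (hd : Disjoint S₁ S₂) (h₁ : G.IsTrail S₁ v (G.ends e i)) (h₂ : G.IsTrail S₂ v (G.ends e i))
    (heS₁ : e ∉ S₁) (heS₂ : e ∉ S₂) (hf : f ∈ S₁) (hQ : G.IsTrail Q (G.ends f j) (G.ends e !i))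
    (hQS : Disjoint Q (S₁ ∪ S₂)) : G.DoublyJoined D v (G.ends e !i) := by
  obtain ⟨A, B, -, rfl, hA, -⟩ := h₁.exists_split hf j
  rw [disjoint_union_right, disjoint_union_right] at hQS
  rw [disjoint_union_left] at hd
  rw [subset_erase] at hQD
  rw [mem_union, not_or] at heS₁
  exact ⟨A ∪ Q, union_subset (subset_union_left.trans hS₁D) hQD.1, insert e S₂,
    insert_subset he hS₂D, by simp [heS₁, hQD, hd.1, hQS.2], hA.append hQ hQS.1.1.symm,
    h₂.snoc heS₂⟩

theorem DoublyJoined.extend (h : G.DoublyJoined D v (G.ends e i)) (he : e ∈ D)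
    (hQ : G.IsTrail Q v (G.ends e !i)) (hQD : Q ⊆ D.erase e) :
    G.DoublyJoined D v (G.ends e !i) := by
  obtain ⟨S₁, hS₁D, S₂, hS₂D, hd, h₁, h₂⟩ := h
  by_cases heS : e ∈ S₁ ∪ S₂
  · obtain ⟨T₁, T₂, hdT, hT, hT₁, hT₂⟩ :=
      (h₁.append h₂.symm hd).exists_split heS !i
    have hTD := union_subset hS₁D hS₂D
    rw [← hT, union_subset_iff] at hTD
    exact ⟨T₁, hTD.1, T₂, hTD.2, hdT, hT₁, hT₂.symm⟩
  rw [mem_union, not_or] at heS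
  obtain hQS | ⟨f, hf, j, Q', hQ'Q, hQ'S, hQ'⟩ := hQ.exists_tail_disjoint (S₁ ∪ S₂)
  · rw [subset_erase] at hQD
    exact ⟨insert e S₁, insert_subset he hS₁D, Q, hQD.1,
      disjoint_insert_left.2 ⟨hQD.2, (disjoint_union_right.1 hQS).1.symm⟩, h₁.snoc heS.1, hQ⟩
  obtain hf | hf := mem_union.1 hf
  · exact doublyJoined_of_tail hS₁D hS₂D (hQ'Q.trans hQD) he hd h₁ h₂ heS.1 heS.2 hf hQ' hQ'S
  · exact doublyJoined_of_tail hS₂D hS₁D (hQ'Q.trans hQD) he hd.symm h₂ h₁ heS.2 heS.1 hf hQ'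
      (union_comm S₁ S₂ ▸ hQ'S)

theorem exists_isTrail_or_exists_cut (G : SignedGraph V E) (D : Finset E) (v w : V) :
    (∃ S ⊆ D, G.IsTrail S v w) ∨
      ∃ r : V → ℤˣ, r v = 1 ∧ r w = -1 ∧ ∀ e ∈ D, G.coboundary r e = 1 := by
  classical
  refine or_iff_not_imp_left.2 fun hw ↦
    ⟨fun x ↦ if ∃ S ⊆ D, G.IsTrail S v x then 1 else -1,
      if_pos ⟨∅, empty_subset D, .nil v⟩, if_neg hw, fun e he ↦ ?_⟩
  have extend (i : Bool) (h : ∃ S ⊆ D, G.IsTrail S v (G.ends e i)) :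
      ∃ S ⊆ D, G.IsTrail S v (G.ends e !i) := by
    obtain ⟨S, hSD, hS⟩ := h
    by_cases heS : e ∈ S
    · obtain ⟨T₁, T₂, -, rfl, hT₁, -⟩ := hS.exists_split heS !i
      exact ⟨T₁, subset_union_left.trans hSD, hT₁⟩
    · exact ⟨insert e S, insert_subset he hSD, hS.snoc heS⟩
  have hiff : (∃ S ⊆ D, G.IsTrail S v (G.ends e false)) ↔
      ∃ S ⊆ D, G.IsTrail S v (G.ends e true) := ⟨extend false, extend true⟩
  simp only [coboundary, hiff, Int.units_mul_self]

theorem doublyJoined_or_exists_cut (G : SignedGraph V E) (D : Finset E) (v w : V) :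
    G.DoublyJoined D v w ∨
      ∃ r : V → ℤˣ, r v = 1 ∧ r w = -1 ∧ #{e ∈ D | G.coboundary r e = -1} ≤ 1 := by
  refine or_iff_not_imp_left.2 fun hvw ↦ ?_
  obtain ⟨S, hSD, hS⟩ | ⟨r, hrv, hrw, hr⟩ := exists_isTrail_or_exists_cut G D v w
  swap
  · refine ⟨r, hrv, hrw, ?_⟩
    rw [filter_false_of_mem fun e he ↦ by rw [hr e he]; decide, card_empty]
    exact zero_le_one
  have hv : G.DoublyJoined D v v :=
    ⟨∅, empty_subset D, ∅, empty_subset D, disjoint_empty_left ∅, .nil v, .nil v⟩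
  obtain ⟨e, he, i, T, hTS, hi, hi', hT⟩ := hS.exists_exit hv hvw
  -- The edge leaving the set of vertices doubly joined to `v` is a bridge.
  obtain ⟨Q, hQD, hQ⟩ | ⟨r, hrv, hrx, hr⟩ :=
    exists_isTrail_or_exists_cut G (D.erase e) v (G.ends e !i)
  · exact absurd (hi.extend (hSD he) hQ hQD) hi'
  have hrw : r (G.ends e !i) * r w = 1 := by
    rw [← hT.prod_coboundary]
    exact prod_eq_one fun f hf ↦ hr f (erase_subset_erase e hSD (hTS hf))
  refine ⟨r, hrv, by rw [← hrx, mul_eq_one_iff_eq_inv.1 hrw, Int.units_inv_eq_self], ?_⟩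
  refine (card_le_card (t := {e}) fun f hf ↦ mem_singleton.2 ?_).trans_eq (card_singleton e)
  rw [mem_filter] at hf
  by_contra hfe
  rw [hr f (mem_erase.2 ⟨hfe, hf.1⟩)] at hf
  exact absurd hf.2 (by decide)

end Menger

section Switch

variable {A S : Finset E} {s t : V → ℤˣ}

/-- The result of switching `G` at the vertices where `s = -1`: an edge changes its sign if exactly
one of its half-edges is attached at such a vertex. -/
def switch (G : SignedGraph V E) (s : V → ℤˣ) : SignedGraph V E where
  ends := G.ends
  sign e := G.sign e * G.coboundary s e

/-- `S` is an even edge set with an odd number of negative edges. -/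
def IsNegativeEven (G : SignedGraph V E) (S : Finset E) : Prop :=
  G.IsEven S ∧ G.signOf S = -1

/-- The signature of `G` on `A` is equivalent, up to switching, to one with a single negative edge.
For even `A` of sign `-1` this is the notion of a tightly unbalanced signed graph. -/
def IsTight (G : SignedGraph V E) (A : Finset E) : Prop :=
  ∃ s, #((G.switch s).negEdges A) = 1

theorem mem_negEdges {e : E} : e ∈ G.negEdges S ↔ e ∈ S ∧ G.sign e = -1 := mem_filter

theorem switch_switch : (G.switch s).switch t = G.switch (s * t) := by
  simp only [switch, mk.injEq, true_and]
  exact funext fun e ↦ (mul_assoc ..).trans (congrArg _ (coboundary_mul s t e).symm)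

theorem IsEven.signOf_switch (hS : G.IsEven S) : (G.switch s).signOf S = G.signOf S := by
  simp only [signOf, switch, prod_mul_distrib, hS s, mul_one]

theorem isNegativeEven_switch_iff : (G.switch s).IsNegativeEven S ↔ G.IsNegativeEven S :=
  and_congr_right fun hS : G.IsEven S ↦ by rw [hS.signOf_switch]

theorem signOf_eq_neg_one_pow_card_negEdges : G.signOf S = (-1) ^ #(G.negEdges S) := by
  have hpos : ∏ e ∈ S with ¬ G.sign e = -1, G.sign e = 1 :=
    prod_eq_one fun e he ↦ (Int.units_eq_one_or _).resolve_right (mem_filter.1 he).2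
  rw [signOf, ← prod_filter_mul_prod_filter_not S (G.sign · = -1), hpos, mul_one]
  exact prod_eq_pow_card fun e he ↦ (mem_filter.1 he).2

theorem IsNegativeEven.three_le_card_negEdges_switch (hA : G.IsNegativeEven A)
    (ht : ¬ G.IsTight A) (s : V → ℤˣ) : 3 ≤ #((G.switch s).negEdges A) := by
  have hsign := (isNegativeEven_switch_iff (s := s).2 hA).2
  rw [signOf_eq_neg_one_pow_card_negEdges] at hsign
  obtain ⟨k, hk⟩ : Odd #((G.switch s).negEdges A) := by
    by_contra heven
    rw [(Nat.not_odd_iff_even.1 heven).neg_one_pow] at hsign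
    exact absurd hsign (by decide)
  have : #((G.switch s).negEdges A) ≠ 1 := fun h ↦ ht ⟨s, h⟩
  lia

end Switch

section Detach

variable [DecidableEq E] {S : Finset E} {v : V} {e₁ e₂ : E} {i j : Bool}

/-- The graph obtained from `G` by reattaching all half-edges in `h` at the new vertex `none`. -/
def detach (G : SignedGraph V E) (h : Finset (E × Bool)) : SignedGraph (Option V) E where
  ends e i := if (e, i) ∈ h then none else some (G.ends e i)
  sign := G.sign

/-- The sign function on the vertices of `G.detach h` separating the new vertex from the old
ones. -/
def detachCut : Option V → ℤˣ
  | none => -1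
  | some _ => 1

theorem coboundary_detach_getD {h : Finset (E × Bool)} (hh : ∀ p ∈ h, G.ends p.1 p.2 = v)
    (s : V → ℤˣ) (e : E) :
    (G.detach h).coboundary (fun x ↦ s (x.getD v)) e = G.coboundary s e := by
  have hends (i : Bool) : ((G.detach h).ends e i).getD v = G.ends e i := by
    by_cases hi : (e, i) ∈ h
    · simp [detach, hi, hh _ hi]
    · simp [detach, hi]
  simp only [coboundary, hends]

theorem coboundary_detach_of_cut {h : Finset (E × Bool)} (hh : ∀ p ∈ h, G.ends p.1 p.2 = v)
    {r : Option V → ℤˣ} (hv : r (some v) = 1) (hnone : r none = -1) (e : E) :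
    (G.detach h).coboundary r e =
      (G.detach h).coboundary detachCut e * G.coboundary (r ∘ some) e := by
  have hr : r = detachCut * fun x ↦ (r ∘ some) (x.getD v) := by
    funext x
    cases x <;> simp [detachCut, hv, hnone]
  rw [← coboundary_detach_getD hh, ← coboundary_mul, ← hr]

theorem isNegativeEven_of_isTrail_detach {h : Finset (E × Bool)}
    (hh : ∀ p ∈ h, G.ends p.1 p.2 = v) (hS : (G.detach h).IsTrail S (some v) none)
    (hsign : ∀ e ∈ S, G.sign e = (G.detach h).coboundary detachCut e) : G.IsNegativeEven S := by
  refine ⟨fun s ↦ ?_, ?_⟩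
  · simp only [← coboundary_detach_getD hh, hS.prod_coboundary, Option.getD, Int.units_mul_self]
  · rw [signOf, prod_congr rfl hsign, hS.prod_coboundary]
    rfl

theorem coboundary_detachCut_pair (hne : e₁ ≠ e₂) (e : E) :
    (G.detach {(e₁, i), (e₂, j)}).coboundary detachCut e = if e = e₁ ∨ e = e₂ then -1 else 1 := by
  by_cases h₁ : e = e₁
  · subst h₁
    simp [coboundary_eq_mul_not _ e i, detach, hne, detachCut]
  by_cases h₂ : e = e₂
  · subst h₂
    simp [coboundary_eq_mul_not _ e j, detach, h₁, detachCut]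
  simp [coboundary, detach, detachCut, h₁, h₂]

end Detach

-- Detach `e₁` and `e₂` at their common end `v` and delete the other negative edges. A trail from
-- `v` to the detached vertex is then a closed trail of `G` with a single negative edge, while a cut
-- with at most one edge between these two vertices gives a switching with fewer negative edges.
theorem exists_disjoint_isNegativeEven_of_adjacent {A : Finset E} {e₁ e₂ : E} {i j : Bool}
    (hmin : ∀ s, #(G.negEdges A) ≤ #((G.switch s).negEdges A)) (h₁ : e₁ ∈ G.negEdges A)
    (h₂ : e₂ ∈ G.negEdges A) (hne : e₁ ≠ e₂) (hends : G.ends e₁ i = G.ends e₂ j) :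
    ∃ B ⊆ A, ∃ C ⊆ A, Disjoint B C ∧ G.IsNegativeEven B ∧ G.IsNegativeEven C := by
  classical
  set h : Finset (E × Bool) := {(e₁, i), (e₂, j)} with h_def
  have hh : ∀ p ∈ h, G.ends p.1 p.2 = G.ends e₂ j := by simp [h_def, hends]
  let N := G.negEdges A \ {e₁, e₂}
  have hsign : ∀ e ∈ A \ N, G.sign e = (G.detach h).coboundary detachCut e := by
    intro e he
    rw [h_def, coboundary_detachCut_pair hne]
    simp only [N, mem_negEdges, mem_sdiff, mem_insert, mem_singleton] at h₁ h₂ he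
    split_ifs with he'
    · obtain rfl | rfl := he' <;> tauto
    · exact (Int.units_eq_one_or _).resolve_right (by tauto)
  obtain ⟨B, hB, C, hC, hBC, hBt, hCt⟩ | ⟨r, hrv, hrn, hcut⟩ :=
    doublyJoined_or_exists_cut (G.detach h) (A \ N) (some (G.ends e₂ j)) none
  · exact ⟨B, hB.trans sdiff_subset, C, hC.trans sdiff_subset, hBC,
      isNegativeEven_of_isTrail_detach hh hBt fun e he ↦ hsign e (hB he),
      isNegativeEven_of_isTrail_detach hh hCt fun e he ↦ hsign e (hC he)⟩
  exfalso
  have hsub : (G.switch (r ∘ some)).negEdges A ⊆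
      N ∪ {e ∈ A \ N | (G.detach h).coboundary r e = -1} := by
    intro e he
    obtain ⟨heA, he⟩ := mem_negEdges.1 he
    by_cases heN : e ∈ N
    · exact mem_union_left _ heN
    · have heAN := mem_sdiff.2 ⟨heA, heN⟩
      refine mem_union_right _ (mem_filter.2 ⟨heAN, ?_⟩)
      rwa [coboundary_detach_of_cut hh hrv hrn, ← hsign e heAN]
  have hN : #N + #{e₁, e₂} = #(G.negEdges A) :=
    card_sdiff_add_card_eq_card (insert_subset h₁ (singleton_subset_iff.2 h₂))
  rw [card_pair hne] at hN
  have := (hmin _).trans ((card_le_card hsub).trans (card_union_le _ _))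
  lia

section SplitOff

variable [DecidableEq E] {A B C : Finset E} {e₁ e₂ : E} {i j : Bool}

/-- The graph obtained from `G` by splitting off `e₁` and `e₂` at a common end-vertex, where the
half-edges `(e₁, i)` and `(e₂, j)` are attached: `e₁` becomes an edge joining the other ends, with
the product sign. The edge `e₂` is left in place and has to be discarded from the edge set. -/
def splitOff (G : SignedGraph V E) (e₁ : E) (i : Bool) (e₂ : E) (j : Bool) : SignedGraph V E where
  ends := Function.update G.ends e₁ fun b ↦ if b then G.ends e₂ !j else G.ends e₁ !i
  sign := Function.update G.sign e₁ (G.sign e₁ * G.sign e₂)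

/-- The edge set of `G` corresponding to the edge set `B` of the graph obtained from `G` by
splitting off `e₁` and `e₂`. -/
def unsplit (e₁ e₂ : E) (B : Finset E) : Finset E :=
  if e₁ ∈ B then insert e₂ B else B

theorem prod_unsplit {M : Type*} [CommMonoid M] (g : E → M) (he₂ : e₂ ∉ B) :
    ∏ e ∈ unsplit e₁ e₂ B, g e = ∏ e ∈ B, Function.update g e₁ (g e₁ * g e₂) e := by
  by_cases he₁ : e₁ ∈ B
  · rw [unsplit, if_pos he₁, prod_insert he₂, prod_update_of_mem he₁,
      ← mul_prod_erase B g he₁, erase_eq, ← mul_assoc, mul_comm (g e₂)]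
  · rw [unsplit, if_neg he₁, prod_update_of_notMem he₁]

theorem sign_splitOff : (G.splitOff e₁ i e₂ j).sign =
    Function.update G.sign e₁ (G.sign e₁ * G.sign e₂) := rfl

theorem coboundary_splitOff (hends : G.ends e₁ i = G.ends e₂ j) (s : V → ℤˣ) :
    (G.splitOff e₁ i e₂ j).coboundary s =
      Function.update (G.coboundary s) e₁ (G.coboundary s e₁ * G.coboundary s e₂) := by
  funext e
  by_cases he : e = e₁
  · subst he
    have hsq := Int.units_mul_self (s (G.ends e₂ j))
    rw [Function.update_self, coboundary_eq_mul_not (G := G) s e i,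
      coboundary_eq_mul_not (G := G) s e₂ j, hends, mul_mul_mul_comm, hsq, one_mul]
    simp [coboundary, splitOff]
  · simp [coboundary, splitOff, he]

theorem sign_switch_splitOff (hends : G.ends e₁ i = G.ends e₂ j) (s : V → ℤˣ) :
    ((G.splitOff e₁ i e₂ j).switch s).sign = ((G.switch s).splitOff e₁ i e₂ j).sign := by
  funext e
  simp only [switch, coboundary_splitOff hends, sign_splitOff]
  by_cases he : e = e₁
  · subst he
    simp only [Function.update_self, mul_mul_mul_comm]
  · simp only [Function.update_of_ne he]

theorem isNegativeEven_splitOff_iff (hends : G.ends e₁ i = G.ends e₂ j) (he₂ : e₂ ∉ B) :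
    (G.splitOff e₁ i e₂ j).IsNegativeEven B ↔ G.IsNegativeEven (unsplit e₁ e₂ B) := by
  simp only [IsNegativeEven, IsEven, signOf, prod_unsplit _ he₂, coboundary_splitOff hends,
    sign_splitOff]

theorem unsplit_erase (hne : e₁ ≠ e₂) (h₁ : e₁ ∈ A) (h₂ : e₂ ∈ A) :
    unsplit e₁ e₂ (A.erase e₂) = A := by
  rw [unsplit, if_pos (mem_erase.2 ⟨hne, h₁⟩), insert_erase h₂]

theorem unsplit_subset (h₂ : e₂ ∈ A) (hB : B ⊆ A) : unsplit e₁ e₂ B ⊆ A := by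
  rw [unsplit]
  split_ifs
  exacts [insert_subset h₂ hB, hB]

theorem disjoint_unsplit (hd : Disjoint B C) (hB : e₂ ∉ B) (hC : e₂ ∉ C) :
    Disjoint (unsplit e₁ e₂ B) (unsplit e₁ e₂ C) := by
  have : e₁ ∈ B → e₁ ∉ C := fun h ↦ disjoint_left.1 hd h
  unfold unsplit
  split_ifs <;> simp_all

theorem card_negEdges_le_card_negEdges_splitOff (hne : e₁ ≠ e₂) (h₁ : e₁ ∈ A)
    (hneg : ¬ (G.sign e₁ = -1 ∧ G.sign e₂ = -1)) :
    #(G.negEdges A) ≤ #((G.splitOff e₁ i e₂ j).negEdges (A.erase e₂)) := by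
  obtain h | h := Int.units_eq_one_or (G.sign e₂)
  · refine card_le_card fun e he ↦ ?_
    obtain ⟨heA, he⟩ := mem_negEdges.1 he
    have hee₂ : e ≠ e₂ := by rintro rfl; rw [h] at he; exact absurd he (by decide)
    exact mem_negEdges.2 ⟨mem_erase.2 ⟨hee₂, heA⟩, by simpa [sign_splitOff, h] using he⟩
  have he₁ : G.sign e₁ = 1 := (Int.units_eq_one_or _).resolve_right fun h' ↦ hneg ⟨h', h⟩
  have hmem : e₁ ∈ (G.splitOff e₁ i e₂ j).negEdges (A.erase e₂) := by
    simp [mem_negEdges, sign_splitOff, hne, h₁, he₁, h]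
  rw [← card_erase_add_one hmem]
  refine (card_le_card fun e he ↦ ?_).trans (card_insert_le e₂ _)
  obtain ⟨heA, he⟩ := mem_negEdges.1 he
  have hee₁ : e ≠ e₁ := by rintro rfl; rw [he₁] at he; exact absurd he (by decide)
  simp only [mem_negEdges, sign_splitOff, mem_insert, mem_erase, Function.update_of_ne hee₁, he]
  tauto

theorem card_negEdges_le_card_negEdges_splitOff_add_two :
    #(G.negEdges A) ≤ #((G.splitOff e₁ i e₂ j).negEdges (A.erase e₂)) + 2 := by
  refine (card_le_card (t := _ ∪ {e₁, e₂}) fun e he ↦ ?_).trans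
    ((card_union_le _ _).trans (Nat.add_le_add_left card_le_two _))
  by_cases hee₁ : e = e₁
  · simp [hee₁]
  · simp only [mem_negEdges, sign_splitOff, mem_union, mem_insert, mem_singleton, mem_erase,
      Function.update_of_ne hee₁] at he ⊢
    tauto

theorem exists_disjoint_isNegativeEven_of_isTight_splitOff (hA : G.IsNegativeEven A)
    (ht : ¬ G.IsTight A) (h₁ : e₁ ∈ A) (h₂ : e₂ ∈ A) (hne : e₁ ≠ e₂)
    (hends : G.ends e₁ i = G.ends e₂ j) (htight : (G.splitOff e₁ i e₂ j).IsTight (A.erase e₂)) :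
    ∃ B ⊆ A, ∃ C ⊆ A, Disjoint B C ∧ G.IsNegativeEven B ∧ G.IsNegativeEven C := by
  obtain ⟨s, hs⟩ := htight
  rw [negEdges, sign_switch_splitOff hends, ← negEdges] at hs
  have three_le := hA.three_le_card_negEdges_switch ht
  have hneg : (G.switch s).sign e₁ = -1 ∧ (G.switch s).sign e₂ = -1 := by
    by_contra hneg
    have hle := card_negEdges_le_card_negEdges_splitOff (i := i) (j := j) hne h₁ hneg
    have := three_le s
    lia
  have hmin (t : V → ℤˣ) :
      #((G.switch s).negEdges A) ≤ #(((G.switch s).switch t).negEdges A) := by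
    have hle := card_negEdges_le_card_negEdges_splitOff_add_two (G := G.switch s) (A := A)
      (e₁ := e₁) (e₂ := e₂) (i := i) (j := j)
    have := switch_switch (G := G) (t := t) ▸ three_le (s * t)
    lia
  simpa only [isNegativeEven_switch_iff] using exists_disjoint_isNegativeEven_of_adjacent hmin
    (mem_negEdges.2 ⟨h₁, hneg.1⟩) (mem_negEdges.2 ⟨h₂, hneg.2⟩) hne hends

end SplitOff

theorem IsNegativeEven.exists_disjoint_of_pairwise_nonadjacent {A : Finset E}
    (hA : G.IsNegativeEven A) (ht : ¬ G.IsTight A)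
    (hadj : ∀ e₁ ∈ A, ∀ e₂ ∈ A, ∀ i j, G.ends e₁ i = G.ends e₂ j → e₁ = e₂) :
    ∃ B ⊆ A, ∃ C ⊆ A, Disjoint B C ∧ G.IsNegativeEven B ∧ G.IsNegativeEven C := by
  classical
  have hloop {e : E} (he : e ∈ A) : G.IsEven {e} := by
    have htrail := isTrail_singleton (G := G) e false
    by_cases hends : G.ends e false = G.ends e !false
    · exact (hends ▸ htrail).isEven
    obtain ⟨f, hf, i, hfe⟩ :=
      hA.1.exists_mem_sdiff_of_isTrail (singleton_subset_iff.2 he) htrail hends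
    rw [mem_sdiff, mem_singleton] at hf
    exact absurd (hadj f hf.1 e he i _ hfe) hf.2
  have hneg : 1 < #(G.negEdges A) := by
    have h3 := hA.three_le_card_negEdges_switch ht 1
    have hG : G.switch 1 = G := by simp [switch, coboundary]
    rw [hG] at h3
    lia
  obtain ⟨e, he, f, hf, hef⟩ := one_lt_card.1 hneg
  rw [mem_negEdges] at he hf
  exact ⟨{e}, singleton_subset_iff.2 he.1, {f}, singleton_subset_iff.2 hf.1,
    disjoint_singleton.2 hef, ⟨hloop he.1, by simpa [signOf] using he.2⟩,
    ⟨hloop hf.1, by simpa [signOf] using hf.2⟩⟩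

theorem IsNegativeEven.exists_disjoint {A : Finset E} (hA : G.IsNegativeEven A)
    (ht : ¬ G.IsTight A) :
    ∃ B ⊆ A, ∃ C ⊆ A, Disjoint B C ∧ G.IsNegativeEven B ∧ G.IsNegativeEven C := by
  classical
  induction hn : #A using Nat.strong_induction_on generalizing G A with
  | _ n ih =>
  by_cases hadj : ∀ e₁ ∈ A, ∀ e₂ ∈ A, ∀ i j, G.ends e₁ i = G.ends e₂ j → e₁ = e₂
  · exact hA.exists_disjoint_of_pairwise_nonadjacent ht hadj
  push Not at hadj
  obtain ⟨e₁, h₁, e₂, h₂, i, j, hends, hne⟩ := hadj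
  by_cases htight : (G.splitOff e₁ i e₂ j).IsTight (A.erase e₂)
  · exact exists_disjoint_isNegativeEven_of_isTight_splitOff hA ht h₁ h₂ hne hends htight
  have hA' : (G.splitOff e₁ i e₂ j).IsNegativeEven (A.erase e₂) := by
    rwa [isNegativeEven_splitOff_iff hends (notMem_erase e₂ A), unsplit_erase hne h₁ h₂]
  obtain ⟨B, hB, C, hC, hBC, hBneg, hCneg⟩ :=
    ih _ (hn ▸ card_erase_lt_of_mem h₂) hA' htight rfl
  rw [subset_erase] at hB hC
  rw [isNegativeEven_splitOff_iff hends hB.2] at hBneg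
  rw [isNegativeEven_splitOff_iff hends hC.2] at hCneg
  exact ⟨_, unsplit_subset h₂ hB.1, _, unsplit_subset h₂ hC.1, disjoint_unsplit hBC hB.2 hC.2,
    hBneg, hCneg⟩

section Flow

theorem abs_sign (e : E) : |(G.sign e : ℤ)| = 1 := by
  obtain h | h := Int.units_eq_one_or (G.sign e) <;> simp [h]

/-- The coefficient `±1` with which the value of a flow on `e` enters the sum at the end-vertex of
the half-edge `(e, i)`. -/
def Orientation.coeff (O : G.Orientation) (e : E) (i : Bool) : ℤ :=
  if O.dir e i then 1 else -1

theorem Orientation.coeff_true (O : G.Orientation) (e : E) :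
    O.coeff e true = -(G.sign e * O.coeff e false) := by
  have hcompat := O.compat e
  obtain h | h := Int.units_eq_one_or (G.sign e) <;>
    cases hf : O.dir e false <;> cases ht : O.dir e true <;> simp_all [coeff]

/-- The orientation in which all half-edges `(e, false)` point towards their end-vertex. -/
def standardOrientation (G : SignedGraph V E) : G.Orientation where
  dir e i := !i || G.sign e = -1
  compat e := by obtain h | h := Int.units_eq_one_or (G.sign e) <;> simp [h]

variable [Fintype E] [DecidableEq V] {φ : E → ℤ}

/-- The boundary of an integer chain `ψ`: its value at `v` is the excess of the flow `ψ` at `v` with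
respect to the standard orientation. -/
def boundary (G : SignedGraph V E) : (E → ℤ) →ₗ[ℤ] V → ℤ :=
  Fintype.linearCombination ℤ fun e ↦
    Pi.single (G.ends e false) 1 - (G.sign e : ℤ) • Pi.single (G.ends e true) 1

theorem boundary_apply (ψ : E → ℤ) (v : V) :
    G.boundary ψ v = ∑ e, ψ e * ((if G.ends e false = v then 1 else 0) -
      G.sign e * if G.ends e true = v then 1 else 0) := by
  simp [boundary, Fintype.linearCombination_apply, Pi.single_apply, eq_comm]

theorem isFlow_iff_boundary_eq_zero {O : G.Orientation} :
    G.IsFlow O φ ↔ G.boundary (fun e ↦ O.coeff e false * φ e) = 0 := by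
  rw [funext_iff, IsFlow]
  refine forall_congr' fun v ↦ ?_
  have hcoeff (e : E) (i : Bool) : (if O.dir e i then φ e else -φ e) = O.coeff e i * φ e := by
    unfold Orientation.coeff
    split_ifs <;> simp
  rw [boundary_apply, sum_filter, Fintype.sum_prod_type]
  simp only [Fintype.sum_bool, hcoeff, O.coeff_true]
  refine Eq.congr_left (sum_congr rfl fun e _ ↦ ?_)
  split_ifs <;> ring

theorem hasNZkFlow_of_boundary_eq_zero {k : ℕ} (hφ : G.boundary φ = 0)
    (hk : ∀ e, φ e ≠ 0 ∧ |φ e| < k) : G.HasNZkFlow k := by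
  refine ⟨G.standardOrientation, φ, isFlow_iff_boundary_eq_zero.2 ?_, hk⟩
  simpa [Orientation.coeff, standardOrientation] using hφ

theorem FlowAdmissible.exists_boundary_eq_zero (h : G.FlowAdmissible) :
    ∃ ψ : E → ℤ, G.boundary ψ = 0 ∧ ∀ e, ψ e ≠ 0 := by
  obtain ⟨O, φ, hφ, hne⟩ := h
  refine ⟨_, isFlow_iff_boundary_eq_zero.1 hφ, fun e ↦ mul_ne_zero ?_ (hne e)⟩
  unfold Orientation.coeff
  split_ifs <;> decide

theorem sum_mul_boundary [Fintype V] (s : V → ℤˣ) (ψ : E → ℤ) :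
    ∑ v, s v * G.boundary ψ v =
      ∑ e, ψ e * (s (G.ends e false) * (1 - ((G.switch s).sign e : ℤ))) := by
  simp only [boundary_apply, mul_sum]
  rw [sum_comm]
  refine sum_congr rfl fun e _ ↦ ?_
  have hsq : (s (G.ends e false) : ℤ) * s (G.ends e false) = 1 := by
    rw [← Units.val_mul, Int.units_mul_self, Units.val_one]
  simp only [mul_sub, sum_sub_distrib, mul_ite, mul_one, mul_zero, sum_ite_eq, mem_univ, if_true,
    switch, coboundary, Units.val_mul]
  linear_combination ψ e * s (G.ends e true) * G.sign e * hsq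

theorem FlowAdmissible.not_isTight [Finite V] (h : G.FlowAdmissible) : ¬ G.IsTight univ := by
  cases nonempty_fintype V
  rintro ⟨s, hs⟩
  obtain ⟨ψ, hψ, hne⟩ := h.exists_boundary_eq_zero
  obtain ⟨e, he⟩ := card_eq_one.1 hs
  have hsum := sum_mul_boundary (G := G) s ψ
  have he' : (G.switch s).sign e = -1 := (mem_negEdges.1 (he ▸ mem_singleton_self e)).2
  rw [hψ, sum_eq_single e (fun f _ hfe ↦ ?_) (by simp), he'] at hsum
  · simp [hne] at hsum
  · have hf : (G.switch s).sign f = 1 := (Int.units_eq_one_or _).resolve_right fun hf ↦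
      hfe (mem_singleton.1 (he ▸ mem_negEdges.2 ⟨mem_univ f, hf⟩))
    simp [hf]

variable [DecidableEq E] {S T W : Finset E} {u v : V}

/-- `S` carries a flow with all values `±1`, vanishing outside `S`. -/
def HasUnitFlow (G : SignedGraph V E) (S : Finset E) : Prop :=
  ∃ χ : E → ℤ, (∀ e, |χ e| = if e ∈ S then 1 else 0) ∧ G.boundary χ = 0

theorem exists_boundary_single (G : SignedGraph V E) (e : E) (i : Bool) :
    ∃ c : ℤ, |c| = 1 ∧ G.boundary (Pi.single e c) =
      Pi.single (G.ends e i) 1 - (G.sign e : ℤ) • Pi.single (G.ends e !i) 1 := by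
  simp only [boundary, Fintype.linearCombination_apply_single]
  cases i
  · exact ⟨1, abs_one, one_smul ..⟩
  · refine ⟨-G.sign e, by rw [abs_neg, abs_sign], ?_⟩
    obtain h | h := Int.units_eq_one_or (G.sign e) <;> simp [h, add_comm]

theorem IsTrail.exists_unit_chain (h : G.IsTrail S u v) :
    ∃ χ : E → ℤ, (∀ e, |χ e| = if e ∈ S then 1 else 0) ∧
      G.boundary χ = Pi.single u 1 - (G.signOf S : ℤ) • Pi.single v 1 := by
  induction h with
  | nil u => exact ⟨0, by simp, by simp [signOf]⟩
  | @cons S e i v he _ ih =>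
    obtain ⟨χ, hχ, hbd⟩ := ih
    obtain ⟨c, hc, hbd_c⟩ := exists_boundary_single G e i
    refine ⟨(G.sign e : ℤ) • χ + Pi.single e c, fun f ↦ ?_, ?_⟩
    · by_cases hf : f = e
      · subst hf
        have hχf : χ f = 0 := by simpa [he] using hχ f
        simp [hχf, hc]
      · simp [hf, abs_mul, hχ f, abs_sign]
    · have hsign : G.signOf (insert e S) = G.sign e * G.signOf S := prod_insert he
      rw [map_add, map_smul, hbd, hbd_c, hsign, Units.val_mul, smul_sub, smul_smul]
      abel

theorem IsClosedTrail.hasUnitFlow (h : G.IsClosedTrail S) (hS : G.signOf S = 1) :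
    G.HasUnitFlow S := by
  obtain ⟨z, hz⟩ := h
  obtain ⟨χ, hχ, hbd⟩ := hz.exists_unit_chain
  exact ⟨χ, hχ, by simpa [hS] using hbd⟩

theorem HasUnitFlow.union (hS : G.HasUnitFlow S) (hT : G.HasUnitFlow T) (hd : Disjoint S T) :
    G.HasUnitFlow (S ∪ T) := by
  obtain ⟨χ, hχ, hχ₀⟩ := hS
  obtain ⟨ψ, hψ, hψ₀⟩ := hT
  refine ⟨χ + ψ, fun e ↦ ?_, by rw [map_add, hχ₀, hψ₀, add_zero]⟩
  obtain heS | heS := em (e ∈ S)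
  · have hψe : ψ e = 0 := by simpa [disjoint_left.1 hd heS] using hψ e
    simp [hψe, hχ, heS]
  · have hχe : χ e = 0 := by simpa [heS] using hχ e
    simp [hχe, hψ, heS]

theorem IsEven.hasUnitFlow [Fintype V] (hW : G.IsEven W)
    (hpos : ∀ K, G.IsSeparated K W → G.IsClosedTrail K → G.signOf K = 1) : G.HasUnitFlow W :=
  hW.induction_on_components ⟨0, by simp, map_zero _⟩
    (fun K hKW hK ↦ hK.hasUnitFlow (hpos K hKW hK)) fun _ _ hd hS hT ↦ hS.union hT hd

theorem HasUnitFlow.hasNZkFlow_four (hS : G.HasUnitFlow S) (hT : G.HasUnitFlow T)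
    (hST : S ∪ T = univ) : G.HasNZkFlow 4 := by
  obtain ⟨α, hα, hα₀⟩ := hS
  obtain ⟨β, hβ, hβ₀⟩ := hT
  refine hasNZkFlow_of_boundary_eq_zero (φ := α + (2 : ℤ) • β)
    (by rw [map_add, map_smul, hα₀, hβ₀, smul_zero, add_zero]) fun e ↦ ?_
  obtain ⟨hαe, hβe⟩ := And.intro (hα e) (hβ e)
  have he : e ∈ S ∨ e ∈ T := mem_union.1 (hST ▸ mem_univ e)
  simp only [Pi.add_apply, Pi.smul_apply, smul_eq_mul]
  clear hα hβ
  split_ifs at hαe hβe <;> grind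

end Flow

section Cover

variable {A B D S T U W X : Finset E} {z : V}

theorem nonempty_of_signOf_eq_neg_one (hS : G.signOf S = -1) : S.Nonempty := by
  rw [nonempty_iff_ne_empty]
  rintro rfl
  rw [signOf, prod_empty] at hS
  exact absurd hS (by decide)

variable [DecidableEq E]

theorem signOf_union (h : Disjoint S T) : G.signOf (S ∪ T) = G.signOf S * G.signOf T :=
  prod_union h

theorem IsNegativeEven.exists_isClosedTrail [Finite V] (hA : G.IsNegativeEven A) :
    ∃ X ⊆ A, G.IsClosedTrail X ∧ G.signOf X = -1 := by
  classical
  cases nonempty_fintype V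
  by_contra! hpos
  have hone : G.signOf A = 1 := hA.1.induction_on_components rfl
    (fun K hKA hK ↦ (Int.units_eq_one_or _).resolve_right (hpos K hKA.1 hK))
    fun S T hd hS hT ↦ by rw [signOf_union hd, hS, hT, one_mul]
  exact absurd (hone.symm.trans hA.2) (by decide)

variable [DecidableEq V]

theorem IsClosedTrail.exists_negative_through [Fintype V] (hW : G.IsClosedTrail W)
    (hD : G.IsNegativeEven D) (hDW : D ⊆ W) (hz : z ∈ G.suppV W) :
    ∃ Z ⊆ W, G.IsClosedTrail Z ∧ G.signOf Z = -1 ∧ z ∈ G.suppV Z := by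
  obtain ⟨X, hXD, hX, hXneg⟩ := hD.exists_isClosedTrail
  have hXW := hXD.trans hDW
  by_cases hzX : z ∈ G.suppV X
  · exact ⟨X, hXW, hX, hXneg, hzX⟩
  have hzWX : z ∈ G.suppV (W \ X) := by
    rw [← union_sdiff_of_subset hXW, suppV_union, mem_union] at hz
    exact hz.resolve_left hzX
  obtain ⟨K, hKWX, hK, hzK⟩ := (hW.isEven.sdiff hX.isEven hXW).exists_component hzWX
  have hKW : K ⊆ W := hKWX.1.trans sdiff_subset
  obtain hKpos | hKneg := Int.units_eq_one_or (G.signOf K)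
  swap
  · exact ⟨K, hKW, hK, hKneg, hzK⟩
  obtain ⟨y, hyX, hyK⟩ := hW.exists_mem_suppV_of_isSeparated_sdiff hXW
    (nonempty_of_signOf_eq_neg_one hXneg) hKWX (nonempty_of_mem_suppV hzK)
  have hXK : Disjoint X K := disjoint_sdiff.mono_right hKWX.1
  exact ⟨X ∪ K, union_subset hXW hKW, hX.union hK hXK hyX hyK,
    by rw [signOf_union hXK, hXneg, hKpos, mul_one], suppV_mono subset_union_right hzK⟩

variable [Fintype E]

theorem IsClosedTrail.hasUnitFlow_union [Fintype V] (hS : G.IsClosedTrail S)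
    (hT : G.IsClosedTrail T) (hSneg : G.signOf S = -1) (hTneg : G.signOf T = -1) (hd : Disjoint S T)
    (hzS : z ∈ G.suppV S) (hzT : z ∈ G.suppV T) : G.HasUnitFlow (S ∪ T) :=
  (hS.union hT hd hzS hzT).hasUnitFlow (by rw [signOf_union hd, hSneg, hTneg, Int.units_mul_self])

theorem IsClosedTrail.exists_cover_of_negative_component [Fintype V] {K : Finset E}
    (hU : G.IsClosedTrail U) (hUneg : G.signOf U = -1) (hX : G.IsClosedTrail X)
    (hXneg : G.signOf X = -1) (hXU : X ⊆ U) (hKX : G.IsSeparated K (U \ X))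
    (hK : G.IsClosedTrail K) (hKneg : G.signOf K = -1) :
    ∃ S T, S ∪ T = U ∧ G.HasUnitFlow S ∧ G.HasUnitFlow T := by
  have hXne := nonempty_of_signOf_eq_neg_one hXneg
  have hKU : K ⊆ U := hKX.1.trans sdiff_subset
  have hXK : Disjoint X K := disjoint_sdiff.mono_right hKX.1
  obtain ⟨z, hzX, hzK⟩ := hU.exists_mem_suppV_of_isSeparated_sdiff hXU hXne hKX
    (nonempty_of_signOf_eq_neg_one hKneg)
  have hUK : G.signOf (U \ K) = 1 := by
    have := signOf_union (G := G) (disjoint_sdiff (s := K) (t := U))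
    rw [union_sdiff_of_subset hKU, hUneg, hKneg] at this
    simpa using this.symm
  refine ⟨X ∪ K, U \ K, ?_, hX.hasUnitFlow_union hK hXneg hKneg hXK hzX hzK,
    (hU.sdiff_of_isSeparated_sdiff hX hXU hXne hK hKX).hasUnitFlow hUK⟩
  rw [union_assoc, union_sdiff_of_subset hKU, union_eq_right.2 hXU]

theorem IsClosedTrail.exists_cover [Finite V] (hU : G.IsClosedTrail U) (hUneg : G.signOf U = -1)
    (hAU : A ⊆ U) (hBU : B ⊆ U) (hAB : Disjoint A B) (hA : G.IsNegativeEven A)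
    (hB : G.IsNegativeEven B) : ∃ S T, S ∪ T = U ∧ G.HasUnitFlow S ∧ G.HasUnitFlow T := by
  cases nonempty_fintype V
  obtain ⟨X, hXA, hX, hXneg⟩ := hA.exists_isClosedTrail
  have hXU := hXA.trans hAU
  have hWeven : G.IsEven (U \ X) := hU.isEven.sdiff hX.isEven hXU
  by_cases hpos : ∀ K, G.IsSeparated K (U \ X) → G.IsClosedTrail K → G.signOf K = 1
  swap
  · push Not at hpos
    obtain ⟨K, hKX, hK, hKneg⟩ := hpos
    exact hU.exists_cover_of_negative_component hUneg hX hXneg hXU hKX hK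
      ((Int.units_eq_one_or _).resolve_left hKneg)
  obtain ⟨Y, hYB, hY, hYneg⟩ := hB.exists_isClosedTrail
  have hYW : Y ⊆ U \ X := subset_sdiff.2 ⟨hYB.trans hBU, (hAB.mono hXA hYB).symm⟩
  obtain ⟨y, hy⟩ := suppV_nonempty (G := G) (nonempty_of_signOf_eq_neg_one hYneg)
  obtain ⟨K, hKW, hK, hyK⟩ := hWeven.exists_component (suppV_mono hYW hy)
  have hYK : Y ⊆ K := hKW.subset_of_isClosedTrail hY hYW hy hyK
  obtain ⟨z, hzX, hzK⟩ := hU.exists_mem_suppV_of_isSeparated_sdiff hXU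
    (nonempty_of_signOf_eq_neg_one hXneg) hKW (nonempty_of_mem_suppV hyK)
  obtain ⟨Z, hZK, hZ, hZneg, hzZ⟩ := hK.exists_negative_through ⟨hY.isEven, hYneg⟩ hYK hzK
  have hZW := hZK.trans hKW.1
  refine ⟨U \ X, X ∪ Z, ?_, hWeven.hasUnitFlow hpos,
    hX.hasUnitFlow_union hZ hXneg hZneg (disjoint_sdiff.mono_right hZW) hzX hzZ⟩
  rw [← union_assoc, sdiff_union_of_subset hXU, union_eq_left.2 (hZW.trans sdiff_subset)]

end Cover

section Eulerian

variable [Fintype E] [DecidableEq V] [DecidableEq E]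

theorem Eulerian.isEven_univ (hG : G.Eulerian) : G.IsEven univ := fun s ↦ by
  have hends : ∏ e, G.coboundary s e = ∏ p : E × Bool, s (G.ends p.1 p.2) := by
    simp [Fintype.prod_prod_type, coboundary, mul_comm]
  rw [hends, prod_comp s]
  refine prod_eq_one fun v _ ↦ ?_
  obtain ⟨k, hk⟩ := hG.2 v
  simp only [valency, valencyOn, mem_univ, true_and] at hk
  rw [hk, pow_add, Int.units_mul_self]

theorem Connected.eq_univ_of_isSeparated [Fintype V] {K : Finset E} (hG : G.Connected)
    (hK : G.IsSeparated K univ) (hne : K.Nonempty) : K = univ := by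
  have hclosed (e : E) (i : Bool) (h : G.ends e i ∈ G.suppV K) : e ∈ K := by
    by_contra he
    exact disjoint_left.1 hK.2 h (ends_mem_suppV (mem_sdiff.2 ⟨mem_univ e, he⟩) i)
  obtain ⟨z, hz⟩ := suppV_nonempty (G := G) hne
  have hsupp (v : V) : v ∈ G.suppV K := by
    induction hG.2 z v with
    | refl => exact hz
    | tail _ hadj ih =>
      obtain ⟨e, -, i, rfl, rfl⟩ := hadj
      exact ends_mem_suppV (hclosed e i ih) _
  exact eq_univ_of_forall fun e ↦ hclosed e false (hsupp _)

theorem Eulerian.isClosedTrail_univ [Finite V] (hG : G.Eulerian) : G.IsClosedTrail univ := by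
  cases nonempty_fintype V
  obtain hE | ⟨⟨e⟩⟩ := isEmpty_or_nonempty E
  · obtain ⟨z⟩ := hG.1.1
    exact ⟨z, univ_eq_empty (α := E) ▸ .nil z⟩
  obtain ⟨K, hKE, hK, hzK⟩ := hG.isEven_univ.exists_component (ends_mem_suppV (mem_univ e) false)
  exact hG.1.eq_univ_of_isSeparated hKE (nonempty_of_mem_suppV hzK) ▸ hK

end Eulerian

end SignedGraph

open SignedGraph Finset in
/-- Every signed eulerian graph that admits a nowhere-zero
integer flow admits a nowhere-zero `4`-flow. -/
theorem stmt3 {V E : Type} [Fintype V] [Fintype E] [DecidableEq V]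
    [DecidableEq E] (G : SignedGraph V E) (hG : G.Eulerian)
    (hadm : G.FlowAdmissible) :
    G.HasNZkFlow 4 := by
  have htrail : G.IsClosedTrail univ := hG.isClosedTrail_univ
  obtain hpos | hneg := Int.units_eq_one_or (G.signOf univ)
  · have hflow : G.HasUnitFlow univ := htrail.hasUnitFlow hpos
    exact hflow.hasNZkFlow_four hflow (union_idempotent univ)
  obtain ⟨A, hAE, B, hBE, hAB, hA, hB⟩ :=
    IsNegativeEven.exists_disjoint ⟨htrail.isEven, hneg⟩ hadm.not_isTight
  obtain ⟨S, T, hST, hS, hT⟩ := htrail.exists_cover hneg hAE hBE hAB hA hB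
  exact hS.hasNZkFlow_four hT hST
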